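/- In the setting of the sufficient-condition theorem for morphisms (injective ℂ-algebra homomorphism φ: Λ₁ → Λ₂, group homomorphism ψ: Ŵ₁ → Ŵ₂ with φ(w(a)) = ψ(w)(φ(a)), a ℂ-subspace U ⊆ Λ₂ with 1 ∈ U such that multiplication gives a ℂ-linear isomorphism φ(Λ₁) ⊗_ℂ U ≅ Λ₂), assume additionally that Ŵ₁ is finite, that Ŵ₂ is an internal direct product Ŵ₂ = ψ(Ŵ₁) × Ĥ with Ĥ finite, and that (ψ(w)·h)(φ(a)·u) = φ(w(a))·h(u) for all w ∈ Ŵ₁, h ∈ Ĥ, a ∈ Λ₁, u ∈ U (in particular h(U) ⊆ U). Let e₁ = (1/#Ŵ₁) Σ_{w∈Ŵ₁} w ∈ L₁#Ŵ₁ and e₂ = (1/#Ŵ₂) Σ_{w∈Ŵ₂} w ∈ L₂#Ŵ₂. Then the map X ↦ e₂·Φ(X)·e₂, where Φ is the induced algebra homomorphism L₁#Ŵ₁ → L₂#Ŵ₂, restricts to an injective ℂ-algebra homomorphism from the spherical subalgebra e₁·𝓕_{Λ₁}·e₁ to the spherical subalgebra e₂·𝓕_{Λ₂}·e₂. -/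

import Mathlib

/-!
Statement 2: In the setting of the sufficient-condition theorem (with `φ`, `ψ`, `U` as there,
`1 ∈ U`), if `Ŵ₁` is finite and `Ŵ₂` is an internal direct product `ψ(Ŵ₁) × Ĥ` with `Ĥ`
finite, acting by `(ψ(w)·h)(φ(a)·u) = φ(w(a))·h(u)`, then `X ↦ e₂·Φ(X)·e₂` restricts to an
injective ℂ-algebra homomorphism from the spherical subalgebra `e₁·𝓕_{Λ₁}·e₁` to the
spherical subalgebra `e₂·𝓕_{Λ₂}·e₂`, where `eᵢ = (1/#Ŵᵢ) Σ_{w ∈ Ŵᵢ} w`.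
-/

open scoped TensorProduct

noncomputable section

/-- `gen f w` is the ℂ-linear endomorphism `m_f ∘ w` of `L`. -/
def gen {L : Type*} [Field L] [Algebra ℂ L] (f : L) (w : L ≃ₐ[ℂ] L) : Module.End ℂ L :=
  (LinearMap.mulLeft ℂ f) ∘ₗ (w.toLinearMap)

/-- The skew monoid ring `L # W` realized inside `End_ℂ(L)`. -/
def skew {L : Type*} [Field L] [Algebra ℂ L] (W : Submonoid (L ≃ₐ[ℂ] L)) :
    Subalgebra ℂ (Module.End ℂ L) :=
  Algebra.adjoin ℂ { X | ∃ (f : L) (w : L ≃ₐ[ℂ] L), w ∈ W ∧ X = gen f w }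

lemma gen_mem_skew {L : Type*} [Field L] [Algebra ℂ L] {W : Submonoid (L ≃ₐ[ℂ] L)}
    (f : L) {w : L ≃ₐ[ℂ] L} (hw : w ∈ W) : gen f w ∈ skew W :=
  Algebra.subset_adjoin ⟨f, w, hw, rfl⟩

/-- The standard flag order `𝓕_Λ = {X ∈ L#W : X(Λ) ⊆ Λ}`. -/
def flag {L : Type*} [Field L] [Algebra ℂ L] (Λ : Subalgebra ℂ L)
    (W : Submonoid (L ≃ₐ[ℂ] L)) : Set (Module.End ℂ L) :=
  { X | X ∈ skew W ∧ ∀ a ∈ Λ, X a ∈ Λ }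

/-- The symmetrizing idempotent `(1/#s) Σ_{w ∈ s} w` of a finite set `s` of automorphisms. -/
def symIdem {L : Type*} [Field L] [Algebra ℂ L] (s : Finset (L ≃ₐ[ℂ] L)) : Module.End ℂ L :=
  (s.card : ℂ)⁻¹ • ∑ w ∈ s, gen (1 : L) w

lemma symIdem_mem_skew {L : Type*} [Field L] [Algebra ℂ L] {W : Submonoid (L ≃ₐ[ℂ] L)}
    {s : Finset (L ≃ₐ[ℂ] L)} (hs : ∀ w ∈ s, w ∈ W) : symIdem s ∈ skew W :=
  Subalgebra.smul_mem _ (Subalgebra.sum_mem _ fun w hw => gen_mem_skew 1 (hs w hw)) _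

/-- The multiplication map `Λ₁ ⊗_ℂ U → L₂`, `a ⊗ u ↦ φ(a)·u`. -/
def mulMap {L₁ L₂ : Type*} [Field L₁] [Algebra ℂ L₁] [Field L₂] [Algebra ℂ L₂]
    (Λ₁ : Subalgebra ℂ L₁) (U : Submodule ℂ L₂) (φ : L₁ →ₐ[ℂ] L₂) :
    (↥Λ₁ ⊗[ℂ] ↥U) →ₗ[ℂ] L₂ :=
  TensorProduct.lift
    (((LinearMap.mul ℂ L₂) ∘ₗ (φ.toLinearMap ∘ₗ Λ₁.val.toLinearMap)).compl₂ U.subtype)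

section SymIdem

variable {L : Type*} [Field L] [Algebra ℂ L]

lemma gen_apply (f : L) (w : L ≃ₐ[ℂ] L) (x : L) : gen f w x = f * w x := rfl

lemma gen_one_mul_gen_one (v w : L ≃ₐ[ℂ] L) : gen 1 v * gen 1 w = gen (1 : L) (v * w) := by
  ext x
  simp [gen_apply]

variable {W : Subgroup (L ≃ₐ[ℂ] L)} {s : Finset (L ≃ₐ[ℂ] L)}

lemma gen_one_mul_symIdem (hs : ∀ w, w ∈ s ↔ w ∈ W) {v : L ≃ₐ[ℂ] L} (hv : v ∈ W) :
    gen 1 v * symIdem s = symIdem s := by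
  simp only [symIdem, mul_smul_comm, Finset.mul_sum, gen_one_mul_gen_one]
  congr 1
  refine Finset.sum_bijective (v * ·) (Group.mulLeft_bijective v) (fun w => ?_) (fun _ _ => rfl)
  rw [hs, hs, W.mul_mem_cancel_left hv]

lemma card_ne_zero_of_mem_iff (hs : ∀ w, w ∈ s ↔ w ∈ W) : (s.card : ℂ) ≠ 0 :=
  Nat.cast_ne_zero.2 (Finset.card_ne_zero_of_mem ((hs 1).2 W.one_mem))

lemma symIdem_mul_of_invariant (hs : ∀ w, w ∈ s ↔ w ∈ W) {T : Module.End ℂ L}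
    (hT : ∀ v ∈ W, gen 1 v * T = T) : symIdem s * T = T := by
  rw [symIdem, smul_mul_assoc, Finset.sum_mul,
    Finset.sum_congr rfl fun w hw => hT w ((hs w).1 hw), Finset.sum_const,
    ← Nat.cast_smul_eq_nsmul ℂ, inv_smul_smul₀ (card_ne_zero_of_mem_iff hs)]

lemma symIdem_mul_self (hs : ∀ w, w ∈ s ↔ w ∈ W) : symIdem s * symIdem s = symIdem s :=
  symIdem_mul_of_invariant hs fun _ hv => gen_one_mul_symIdem hs hv

lemma symIdem_apply_of_invariant (hs : ∀ w, w ∈ s ↔ w ∈ W) {x : L}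
    (hx : ∀ v ∈ W, v x = x) : symIdem s x = x := by
  simp only [symIdem, LinearMap.smul_apply, LinearMap.sum_apply, gen_apply, one_mul]
  rw [Finset.sum_congr rfl fun w hw => hx w ((hs w).1 hw), Finset.sum_const,
    ← Nat.cast_smul_eq_nsmul ℂ, inv_smul_smul₀ (card_ne_zero_of_mem_iff hs)]

lemma apply_symIdem (hs : ∀ w, w ∈ s ↔ w ∈ W) {v : L ≃ₐ[ℂ] L} (hv : v ∈ W) (x : L) :
    v (symIdem s x) = symIdem s x := by
  simpa [gen_apply] using LinearMap.congr_fun (gen_one_mul_symIdem hs hv) x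

lemma symIdem_apply_mem {Λ : Subalgebra ℂ L} (hΛ : ∀ w ∈ s, ∀ a ∈ Λ, w a ∈ Λ) {a : L}
    (ha : a ∈ Λ) : symIdem s a ∈ Λ := by
  simp only [symIdem, LinearMap.smul_apply, LinearMap.sum_apply, gen_apply, one_mul]
  exact Λ.smul_mem (Λ.sum_mem fun w hw => hΛ w hw a ha) _

lemma mul_symIdem_eq_of_mem (hs : ∀ w, w ∈ s ↔ w ∈ W) {X Z : Module.End ℂ L}
    (hX : X = symIdem s * Z * symIdem s) : X * symIdem s = X := by
  rw [hX, mul_assoc, symIdem_mul_self hs]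

lemma gen_one_mul_eq_of_mem (hs : ∀ w, w ∈ s ↔ w ∈ W) {X Z : Module.End ℂ L}
    (hX : X = symIdem s * Z * symIdem s) {v : L ≃ₐ[ℂ] L} (hv : v ∈ W) : gen 1 v * X = X := by
  rw [hX, ← mul_assoc, ← mul_assoc, gen_one_mul_symIdem hs hv]

end SymIdem

/-- Algebra homomorphisms which agree on a subalgebra agree on its fraction field. -/
lemma eq_of_eq_on_subalgebra {L₁ L₂ : Type*} [Field L₁] [Algebra ℂ L₁] [Field L₂] [Algebra ℂ L₂]
    {Λ : Subalgebra ℂ L₁} [IsFractionRing Λ L₁] {f g : L₁ →ₐ[ℂ] L₂}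
    (h : ∀ a ∈ Λ, f a = g a) (x : L₁) : f x = g x := by
  obtain ⟨a, b, -, rfl⟩ := IsFractionRing.div_surjective (A := Λ) x
  rw [map_div₀, map_div₀]
  exact congrArg₂ _ (h a a.2) (h b b.2)

/-- Induction principle for a homomorphism out of the skew monoid ring. -/
lemma skew_hom_induction {L₁ L₂ : Type*} [Field L₁] [Algebra ℂ L₁] [Field L₂] [Algebra ℂ L₂]
    {W₁ : Submonoid (L₁ ≃ₐ[ℂ] L₁)} {W₂ : Submonoid (L₂ ≃ₐ[ℂ] L₂)}
    (Φ : skew W₁ →ₐ[ℂ] skew W₂) (p : Module.End ℂ L₁ → Module.End ℂ L₂ → Prop)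
    (hgen : ∀ (f : L₁) (w : L₁ ≃ₐ[ℂ] L₁) (hw : w ∈ W₁),
      p (gen f w) (Φ ⟨gen f w, gen_mem_skew f hw⟩))
    (halg : ∀ c : ℂ, p (algebraMap ℂ _ c) (algebraMap ℂ _ c))
    (hadd : ∀ X X' Y Y', p X X' → p Y Y' → p (X + Y) (X' + Y'))
    (hmul : ∀ X X' Y Y', p X X' → p Y Y' → p (X * Y) (X' * Y'))
    (X : skew W₁) : p X (Φ X) := by
  obtain ⟨X, hX⟩ := X
  induction hX using Algebra.adjoin_induction with
  | mem x hx =>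
    obtain ⟨f, w, hw, rfl⟩ := hx
    exact hgen f w hw
  | algebraMap c =>
    have h : Φ (algebraMap ℂ _ c) = algebraMap ℂ _ c := Φ.commutes c
    exact (congrArg (fun T : skew W₂ => p (algebraMap ℂ _ c) T) h).mpr (halg c)
  | add x y hx hy ihx ihy =>
    have h := map_add Φ ⟨x, hx⟩ ⟨y, hy⟩
    exact (congrArg (fun T : skew W₂ => p (x + y) T) h).mpr (hadd _ _ _ _ ihx ihy)
  | mul x y hx hy ihx ihy =>
    have h := map_mul Φ ⟨x, hx⟩ ⟨y, hy⟩
    exact (congrArg (fun T : skew W₂ => p (x * y) T) h).mpr (hmul _ _ _ _ ihx ihy)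

theorem spherical_restriction
    {L₁ L₂ : Type*} [Field L₁] [Algebra ℂ L₁] [Field L₂] [Algebra ℂ L₂]
    (Λ₁ : Subalgebra ℂ L₁) (Λ₂ : Subalgebra ℂ L₂)
    [IsFractionRing Λ₁ L₁] [IsFractionRing Λ₂ L₂]
    (W₁ : Subgroup (L₁ ≃ₐ[ℂ] L₁)) (W₂ : Subgroup (L₂ ≃ₐ[ℂ] L₂))
    (hW₁ : ∀ w ∈ W₁, ∀ x : L₁, x ∈ Λ₁ ↔ w x ∈ Λ₁)
    (hW₂ : ∀ w ∈ W₂, ∀ x : L₂, x ∈ Λ₂ ↔ w x ∈ Λ₂)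
    -- Ŵ₁ and Ŵ₂ are finite, enumerated by s₁ and s₂
    (s₁ : Finset (L₁ ≃ₐ[ℂ] L₁)) (hs₁ : ∀ w, w ∈ s₁ ↔ w ∈ W₁)
    (s₂ : Finset (L₂ ≃ₐ[ℂ] L₂)) (hs₂ : ∀ w, w ∈ s₂ ↔ w ∈ W₂)
    (φ : L₁ →ₐ[ℂ] L₂) (hφ : ∀ x ∈ Λ₁, φ x ∈ Λ₂)
    (ψ : W₁ →* W₂)
    (hcompat : ∀ (w : W₁) (a : L₁), a ∈ Λ₁ →
      φ ((w : L₁ ≃ₐ[ℂ] L₁) a) = ((ψ w : W₂) : L₂ ≃ₐ[ℂ] L₂) (φ a))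
    -- the induced algebra homomorphism Φ
    (Φ : skew W₁.toSubmonoid →ₐ[ℂ] skew W₂.toSubmonoid)
    (hΦ : ∀ (f : L₁) (w : L₁ ≃ₐ[ℂ] L₁) (hw : w ∈ W₁),
      (Φ ⟨gen f w, gen_mem_skew f hw⟩ : Module.End ℂ L₂)
        = gen (φ f) ((ψ ⟨w, hw⟩ : W₂) : L₂ ≃ₐ[ℂ] L₂))
    -- the subspace U with Λ₂ ≅ φ(Λ₁) ⊗ U via multiplication, and 1 ∈ U
    (U : Submodule ℂ L₂) (hU : U ≤ Λ₂.toSubmodule) (hU1 : (1 : L₂) ∈ U)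
    (hinj : Function.Injective (mulMap Λ₁ U φ))
    (hrange : LinearMap.range (mulMap Λ₁ U φ) = Λ₂.toSubmodule)
    -- Ŵ₂ is the internal direct product ψ(Ŵ₁) × Ĥ, with Ĥ a finite subgroup
    (H : Subgroup (L₂ ≃ₐ[ℂ] L₂)) (hHW₂ : H ≤ W₂)
    (hcomm : ∀ (w : W₁) (h : L₂ ≃ₐ[ℂ] L₂), h ∈ H →
      Commute ((ψ w : W₂) : L₂ ≃ₐ[ℂ] L₂) h)
    (hgen : ∀ v ∈ W₂, ∃ (w : W₁) (h : L₂ ≃ₐ[ℂ] L₂), h ∈ H ∧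
      v = ((ψ w : W₂) : L₂ ≃ₐ[ℂ] L₂) * h)
    (htriv : ∀ w : W₁, ((ψ w : W₂) : L₂ ≃ₐ[ℂ] L₂) ∈ H →
      ((ψ w : W₂) : L₂ ≃ₐ[ℂ] L₂) = 1)
    (hHU : ∀ h ∈ H, ∀ u ∈ U, (h : L₂ ≃ₐ[ℂ] L₂) u ∈ U)
    -- the action of Ŵ₂ = ψ(Ŵ₁) × Ĥ on the decomposition Λ₂ = φ(Λ₁) ⊗ U
    (haction : ∀ (w : W₁) (h : L₂ ≃ₐ[ℂ] L₂), h ∈ H → ∀ a ∈ Λ₁, ∀ u ∈ U,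
      (((ψ w : W₂) : L₂ ≃ₐ[ℂ] L₂) * h) (φ a * u) = φ ((w : L₁ ≃ₐ[ℂ] L₁) a) * h u) :
    -- conclusion: X ↦ e₂ Φ(X) e₂ restricts to an injective ℂ-algebra homomorphism
    -- e₁·𝓕_{Λ₁}·e₁ → e₂·𝓕_{Λ₂}·e₂
    (∀ X : skew W₁.toSubmonoid,
        (X : Module.End ℂ L₁) ∈ {y | ∃ Z ∈ flag Λ₁ W₁.toSubmonoid, y = symIdem s₁ * Z * symIdem s₁} →
        symIdem s₂ * (Φ X : Module.End ℂ L₂) * symIdem s₂ ∈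
          {y | ∃ Z ∈ flag Λ₂ W₂.toSubmonoid, y = symIdem s₂ * Z * symIdem s₂}) ∧
    (symIdem s₂ * (Φ ⟨symIdem s₁, symIdem_mem_skew fun w hw => (hs₁ w).1 hw⟩ : Module.End ℂ L₂)
        * symIdem s₂ = symIdem s₂) ∧
    (∀ X Y : skew W₁.toSubmonoid,
        (X : Module.End ℂ L₁) ∈ {y | ∃ Z ∈ flag Λ₁ W₁.toSubmonoid, y = symIdem s₁ * Z * symIdem s₁} →
        (Y : Module.End ℂ L₁) ∈ {y | ∃ Z ∈ flag Λ₁ W₁.toSubmonoid, y = symIdem s₁ * Z * symIdem s₁} →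
        symIdem s₂ * (Φ (X * Y) : Module.End ℂ L₂) * symIdem s₂ =
          (symIdem s₂ * (Φ X : Module.End ℂ L₂) * symIdem s₂) *
          (symIdem s₂ * (Φ Y : Module.End ℂ L₂) * symIdem s₂)) ∧
    (∀ X Y : skew W₁.toSubmonoid,
        (X : Module.End ℂ L₁) ∈ {y | ∃ Z ∈ flag Λ₁ W₁.toSubmonoid, y = symIdem s₁ * Z * symIdem s₁} →
        (Y : Module.End ℂ L₁) ∈ {y | ∃ Z ∈ flag Λ₁ W₁.toSubmonoid, y = symIdem s₁ * Z * symIdem s₁} →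
        symIdem s₂ * (Φ X : Module.End ℂ L₂) * symIdem s₂ =
          symIdem s₂ * (Φ Y : Module.End ℂ L₂) * symIdem s₂ → X = Y) := by
  have hψφ (w : W₁) (x : L₁) : (ψ w : L₂ ≃ₐ[ℂ] L₂) (φ x) = φ ((w : L₁ ≃ₐ[ℂ] L₁) x) :=
    eq_of_eq_on_subalgebra (Λ := Λ₁)
      (f := ((ψ w : L₂ ≃ₐ[ℂ] L₂) : L₂ →ₐ[ℂ] L₂).comp φ)
      (g := φ.comp ((w : L₁ ≃ₐ[ℂ] L₁) : L₁ →ₐ[ℂ] L₁))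
      (fun a ha => (hcompat w a ha).symm) x
  have hHφ (h : L₂ ≃ₐ[ℂ] L₂) (hh : h ∈ H) (x : L₁) : h (φ x) = φ x :=
    eq_of_eq_on_subalgebra (Λ := Λ₁) (f := (h : L₂ →ₐ[ℂ] L₂).comp φ) (g := φ)
      (fun a ha => by simpa using haction 1 h hh a ha 1 hU1) x
  have hψU (w : W₁) (u : L₂) (hu : u ∈ U) : (ψ w : L₂ ≃ₐ[ℂ] L₂) u = u := by
    simpa using haction w 1 H.one_mem 1 Λ₁.one_mem u hu
  have hΦU (X : skew W₁.toSubmonoid) : ∀ x : L₁, ∀ u ∈ U,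
      (Φ X : Module.End ℂ L₂) (φ x * u) = φ ((X : Module.End ℂ L₁) x) * u := by
    refine skew_hom_induction Φ
      (fun X X' => ∀ x : L₁, ∀ u ∈ U, X' (φ x * u) = φ (X x) * u) ?_ ?_ ?_ ?_ X
    · intro f w hw x u hu
      rw [hΦ f w hw, gen_apply, gen_apply, map_mul, hψφ, hψU _ u hu, map_mul, mul_assoc]
    · intro c x u hu
      simp [Module.algebraMap_end_apply]
    · intro X X' Y Y' hX hY x u hu
      simp [hX x u hu, hY x u hu, add_mul]
    · intro X X' Y Y' hX hY x u hu
      simp [hX _ u hu, hY x u hu]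
  have hΦφ (X : skew W₁.toSubmonoid) (x : L₁) :
      (Φ X : Module.End ℂ L₂) (φ x) = φ ((X : Module.End ℂ L₁) x) := by
    simpa using hΦU X x 1 hU1
  have hΦH (h : L₂ ≃ₐ[ℂ] L₂) (hh : h ∈ H) (X : skew W₁.toSubmonoid) :
      Commute (gen 1 h) (Φ X : Module.End ℂ L₂) := by
    refine skew_hom_induction Φ (fun _ X' => Commute (gen 1 h) X') ?_ ?_ ?_ ?_ X
    · intro f w hw
      rw [hΦ f w hw]
      ext x
      have hc := AlgEquiv.congr_fun (hcomm ⟨w, hw⟩ h hh) x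
      simp only [AlgEquiv.mul_apply] at hc
      simp [gen_apply, hHφ h hh, hc]
    · exact fun c => Algebra.commutes' c _ |>.symm
    · exact fun _ _ _ _ hX hY => hX.add_right hY
    · exact fun _ _ _ _ hX hY => hX.mul_right hY
  have hΦinv (X : skew W₁.toSubmonoid) (hX : ∀ w ∈ W₁, gen 1 w * (X : Module.End ℂ L₁) = X) :
      symIdem s₂ * ((Φ X : Module.End ℂ L₂) * symIdem s₂) = Φ X * symIdem s₂ := by
    refine symIdem_mul_of_invariant hs₂ fun v hv => ?_
    obtain ⟨w, h, hh, rfl⟩ := hgen v hv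
    have hw : gen 1 (ψ w : L₂ ≃ₐ[ℂ] L₂) * (Φ X : Module.End ℂ L₂) = Φ X := by
      have h1 := hΦ 1 w w.2
      rw [map_one] at h1
      rw [← h1, ← MulMemClass.coe_mul, ← map_mul]
      exact congrArg (fun T => (Φ T : Module.End ℂ L₂)) (Subtype.ext (hX w w.2))
    rw [← gen_one_mul_gen_one, mul_assoc, ← mul_assoc (gen 1 h), (hΦH h hh X).eq, mul_assoc,
      gen_one_mul_symIdem hs₂ (hHW₂ hh), ← mul_assoc, hw]
  have hinvφ (x : L₁) : symIdem s₂ (φ (symIdem s₁ x)) = φ (symIdem s₁ x) := by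
    refine symIdem_apply_of_invariant hs₂ fun v hv => ?_
    obtain ⟨w, h, hh, rfl⟩ := hgen v hv
    rw [AlgEquiv.mul_apply, hHφ h hh, hψφ, apply_symIdem hs₁ w.2]
  refine ⟨?_, ?_, ?_, ?_⟩
  · rintro X ⟨Z, hZ, hX⟩
    refine ⟨Φ X, ⟨(Φ X).2, fun b hb => ?_⟩, rfl⟩
    have hXΛ (a : L₁) (ha : a ∈ Λ₁) : (X : Module.End ℂ L₁) a ∈ Λ₁ := by
      have hs (w) (hw : w ∈ s₁) (a) (ha : a ∈ Λ₁) : w a ∈ Λ₁ := (hW₁ w ((hs₁ w).1 hw) a).1 ha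
      rw [hX]
      exact symIdem_apply_mem hs (hZ.2 _ (symIdem_apply_mem hs ha))
    rw [← Subalgebra.mem_toSubmodule, ← hrange] at hb
    obtain ⟨t, rfl⟩ := hb
    induction t with
    | zero => simp
    | tmul a u =>
      have hau : mulMap Λ₁ U φ (a ⊗ₜ u) = φ a * u := rfl
      rw [hau, hΦU X a u u.2]
      exact Λ₂.mul_mem (hφ _ (hXΛ a a.2)) (hU u.2)
    | add s t hs ht =>
      rw [map_add, map_add]
      exact Λ₂.add_mem hs ht
  · rw [mul_assoc, hΦinv _ fun w hw => gen_one_mul_symIdem hs₁ hw]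
    have hE : (⟨symIdem s₁, symIdem_mem_skew fun w hw => (hs₁ w).1 hw⟩ : skew W₁.toSubmonoid)
        = (s₁.card : ℂ)⁻¹ • ∑ w ∈ s₁.attach, ⟨gen 1 w.1, gen_mem_skew 1 ((hs₁ w).1 w.2)⟩ := by
      refine Subtype.ext ?_
      simp [symIdem, ← Finset.sum_attach s₁]
    rw [hE, map_smul, map_sum, Subalgebra.coe_smul, AddSubmonoidClass.coe_finsetSum,
      smul_mul_assoc, Finset.sum_mul]
    have hterm (w : s₁) : (Φ ⟨gen 1 w.1, gen_mem_skew 1 ((hs₁ w).1 w.2)⟩ : Module.End ℂ L₂)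
        * symIdem s₂ = symIdem s₂ := by
      rw [hΦ 1 w.1 ((hs₁ w).1 w.2), map_one]
      exact gen_one_mul_symIdem hs₂ (ψ _).2
    rw [Finset.sum_congr rfl fun w _ => hterm w, Finset.sum_const, Finset.card_attach,
      ← Nat.cast_smul_eq_nsmul ℂ, inv_smul_smul₀ (card_ne_zero_of_mem_iff hs₁)]
  · rintro X Y - ⟨Z, -, hY⟩
    have hY' := hΦinv Y fun w hw => gen_one_mul_eq_of_mem hs₁ hY hw
    rw [mul_assoc (symIdem s₂) (Φ Y : Module.End ℂ L₂), hY', mul_assoc _ (symIdem s₂), hY', map_mul,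
      MulMemClass.coe_mul]
    simp only [mul_assoc]
  · rintro X Y ⟨Z, -, hX⟩ ⟨Z', -, hY⟩ h
    rw [mul_assoc, mul_assoc, hΦinv X fun w hw => gen_one_mul_eq_of_mem hs₁ hX hw,
      hΦinv Y fun w hw => gen_one_mul_eq_of_mem hs₁ hY hw] at h
    refine Subtype.ext ?_
    rw [← mul_symIdem_eq_of_mem hs₁ hX, ← mul_symIdem_eq_of_mem hs₁ hY]
    refine LinearMap.ext fun x => φ.injective ?_
    have hx := LinearMap.congr_fun h (φ (symIdem s₁ x))
    rw [Module.End.mul_apply, Module.End.mul_apply, hinvφ, hΦφ, hΦφ] at hx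
    exact hx
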